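/- Let A be a complex semisimple unital Banach algebra whose socle Soc A is a minimal two-sided ideal. Let a, b ∈ A be nonzero and suppose σ(bx) has at most 0 as an accumulation point for every x ∈ A. Then a = b if and only if σ'(ax) ⊆ σ'(bx) for all x ∈ A. -/

import Mathlib

open Complex

noncomputable section

/-- The nonzero spectrum `σ'(x) = σ(x) \ {0}` of an element of a complex algebra. -/
def nzSpec {A : Type*} [Ring A] [Algebra ℂ A] (x : A) : Set ℂ :=
  spectrum ℂ x \ {0}

/-- The spectral rank of an element: `rank a = sup_{x ∈ A} #σ'(xa)`, valued in `ℕ∞`. -/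
noncomputable def srank {A : Type*} [Ring A] [Algebra ℂ A] (a : A) : ℕ∞ :=
  ⨆ x : A, (nzSpec (x * a)).encard

/-- The socle of `A`: the set of finite-rank elements. -/
def socle (A : Type*) [Ring A] [Algebra ℂ A] : Set A :=
  {a : A | srank a ≠ ⊤}

/-- `A` is (Jacobson) semisimple: its Jacobson radical is `{0}`. -/
def JacobsonSemisimple (A : Type*) [Ring A] : Prop :=
  TwoSidedIdeal.jacobson (⊥ : TwoSidedIdeal A) = ⊥

/-- `Soc A` is a minimal two-sided ideal: it is a nonzero two-sided ideal containing
no two-sided ideals other than `{0}` and itself. -/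
def SocleIsMinimalTwoSidedIdeal (A : Type*) [Ring A] [Algebra ℂ A] : Prop :=
  ∃ I : TwoSidedIdeal A, (I : Set A) = socle A ∧ I ≠ ⊥ ∧
    ∀ J : TwoSidedIdeal A, J ≤ I → J = ⊥ ∨ J = I

/-- `A` is a prime algebra: all nonzero two-sided ideals `I, J` satisfy `IJ ≠ {0}`. -/
def IsPrimeAlgebra (A : Type*) [Ring A] : Prop :=
  ∀ I J : TwoSidedIdeal A, I ≠ ⊥ → J ≠ ⊥ → ∃ x ∈ I, ∃ y ∈ J, x * y ≠ 0

/-- The left annihilator of the socle equals `{0}`. -/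
def LeftAnnSocleTrivial (A : Type*) [Ring A] [Algebra ℂ A] : Prop :=
  {x : A | ∀ y ∈ socle A, x * y = 0} = {0}

/-!
If the spectra of the right multiples of a nonzero `d` accumulate only at `0`, the Riesz projection
of a suitable multiple at an isolated nonzero spectral value is a nonzero idempotent in `dA`. Below
such an idempotent there are no infinite descending chains: an infinite orthogonal family `gₙ`
would give an element `1 + ∑ cₙ gₙ` whose spectrum accumulates at `1`. So `dA` contains a primitive
idempotent `e`, and `eAe = ℂe` by the Gelfand-Mazur argument.

Take such an `e` in `bA`. The nonzero spectrum of `cueye` is that of the scalar `λ` with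
`eycue = λe`, so the inclusion of spectra says that for all `y` and `u` one of `eyaue` and
`ey(a - b)ue` vanishes. By additivity and semiprimeness, `aAe = 0` or `(a - b)Ae = 0`. As the
socle is the ideal generated by `e`, this means that `a` or `a - b` kills the socle from the left;
an element with the spectral property that does so is zero. The difference `a - b` is not known to
have that property, but `aA(a - b)` and `bA(a - b)` vanish, hence `(a - b)A(a - b) = 0`.
-/

open Filter Metric Topology
open Subsemigroup (corner mem_corner_iff)

theorem JacobsonSemisimple.eq_zero_of_forall_mul_mul_eq_zero {R : Type*} [Ring R]
    (hss : JacobsonSemisimple R) {z : R} (h : ∀ y, z * y * z = 0) : z = 0 := by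
  have hz : z ∈ TwoSidedIdeal.jacobson (⊥ : TwoSidedIdeal R) := by
    refine TwoSidedIdeal.mem_jacobson_iff.2 fun y => ⟨1 - y * z, (TwoSidedIdeal.mem_bot R).2 ?_⟩
    calc (1 - y * z) * y * z + (1 - y * z) - 1 = -(y * (z * y * z)) := by noncomm_ring
      _ = 0 := by rw [h, mul_zero, neg_zero]
  rwa [hss, TwoSidedIdeal.mem_bot] at hz

section NonzeroSpectrum

variable {A : Type*} [Ring A] [Algebra ℂ A]

theorem nzSpec_mul_comm (x y : A) : nzSpec (x * y) = nzSpec (y * x) :=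
  spectrum.nonzero_mul_comm x y

theorem mem_spectrum_of_mul_eq_smul {R B : Type*} [CommSemiring R] [Ring B] [Algebra R B]
    {x g : B} {μ : R} (h : x * g = μ • g) (hg : g ≠ 0) : μ ∈ spectrum R x := by
  intro hu
  refine hg (hu.mul_right_eq_zero.1 ?_)
  rw [sub_mul, h, Algebra.smul_def, sub_self]

theorem nzSpec_smul_of_isIdempotentElem {e : A} (he : IsIdempotentElem e) (he0 : e ≠ 0) (s : ℂ) :
    nzSpec (s • e) = {s} \ {0} := by
  have : Nontrivial A := ⟨e, 0, he0⟩
  ext μ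
  refine and_congr_left fun hμ => ⟨fun h => ?_, ?_⟩
  · have h1 : (1 : ℂ) ∈ spectrum ℂ e := mem_spectrum_of_mul_eq_smul (by rw [he.eq, one_smul]) he0
    rw [spectrum.smul_eq_smul s e ⟨1, h1⟩] at h
    obtain ⟨ν, hν, rfl⟩ := h
    rcases he.spectrum_subset ℂ hν with rfl | rfl
    · simp at hμ
    · simp
  · rintro rfl
    exact mem_spectrum_of_mul_eq_smul (by rw [smul_mul_assoc, he.eq]) he0

theorem JacobsonSemisimple.eq_zero_of_nzSpec_mul_eq_empty (hss : JacobsonSemisimple A) {d : A}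
    (h : ∀ y, nzSpec (d * y) = ∅) : d = 0 := by
  have hd : d ∈ TwoSidedIdeal.jacobson (⊥ : TwoSidedIdeal A) := by
    rw [TwoSidedIdeal.mem_jacobson_iff]
    intro y
    have hunit : IsUnit (algebraMap ℂ A (-1) - y * d) := by
      by_contra hc
      have hmem : (-1 : ℂ) ∈ nzSpec (y * d) := ⟨hc, by simp⟩
      rw [nzSpec_mul_comm, h y] at hmem
      exact hmem
    obtain ⟨z, -, hz⟩ := isUnit_iff_exists.1 hunit
    refine ⟨-z, (TwoSidedIdeal.mem_bot A).2 ?_⟩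
    rw [← hz, map_neg, map_one]
    noncomm_ring
  rwa [hss, TwoSidedIdeal.mem_bot] at hd

end NonzeroSpectrum

section CircleIntegral

theorem map_circleIntegral {E F : Type*} [NormedAddCommGroup E] [NormedSpace ℂ E]
    [CompleteSpace E] [NormedAddCommGroup F] [NormedSpace ℂ F] [CompleteSpace F] (L : E →L[ℂ] F)
    {g : ℂ → E} {c : ℂ} {r : ℝ} (hg : CircleIntegrable g c r) :
    L (∮ z in C(c, r), g z) = ∮ z in C(c, r), L (g z) := by
  simp only [circleIntegral, ← ContinuousLinearMap.intervalIntegral_comp_comm L hg.out, map_smul]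

variable {A : Type*} [NormedRing A] [NormedAlgebra ℂ A] [CompleteSpace A]

theorem mul_circleIntegral {g : ℂ → A} {c : ℂ} {r : ℝ} (hg : CircleIntegrable g c r) (a : A) :
    a * (∮ z in C(c, r), g z) = ∮ z in C(c, r), a * g z :=
  map_circleIntegral (ContinuousLinearMap.mul ℂ A a) hg

theorem circleIntegral_mul {g : ℂ → A} {c : ℂ} {r : ℝ} (hg : CircleIntegrable g c r) (a : A) :
    (∮ z in C(c, r), g z) * a = ∮ z in C(c, r), g z * a :=
  map_circleIntegral ((ContinuousLinearMap.mul ℂ A).flip a) hg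

end CircleIntegral

section RieszProjection

variable {A : Type*} [NormedRing A] [NormedAlgebra ℂ A] {x : A} {c w : ℂ} {r s : ℝ}

/-- The Cauchy integral `(2πi)⁻¹ ∮ (z - w)⁻¹ (z - x)⁻¹ dz` of the resolvent of `x` over the circle
`|z - c| = r`. It partially inverts `w - x`. -/
def resolventCauchyIntegral (x : A) (c : ℂ) (r : ℝ) (w : ℂ) : A :=
  (2 * Real.pi * I : ℂ)⁻¹ • ∮ z in C(c, r), (z - w)⁻¹ • resolvent x z

/-- The Riesz projection `(2πi)⁻¹ ∮ (z - x)⁻¹ dz` of `x` along the circle `|z - c| = r`; it is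
meaningful when the circle avoids the spectrum of `x`. -/
def rieszProjection (x : A) (c : ℂ) (r : ℝ) : A :=
  (2 * Real.pi * I : ℂ)⁻¹ • ∮ z in C(c, r), resolvent x z

variable [CompleteSpace A]

theorem differentiableAt_resolvent {z : ℂ} (hz : z ∈ resolventSet ℂ x) :
    DifferentiableAt ℂ (resolvent x) z :=
  (spectrum.hasDerivAt_resolvent_const_left hz).differentiableAt

theorem circleIntegrable_resolvent (hr : 0 ≤ r) (h : sphere c r ⊆ resolventSet ℂ x) :
    CircleIntegrable (resolvent x) c r :=
  ContinuousOn.circleIntegrable hr fun _ hz =>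
    (differentiableAt_resolvent (h hz)).continuousAt.continuousWithinAt

theorem circleIntegrable_sub_inv_smul_resolvent (hr : 0 ≤ r) (h : sphere c r ⊆ resolventSet ℂ x)
    (hw : w ∉ sphere c r) : CircleIntegrable (fun z => (z - w)⁻¹ • resolvent x z) c r := by
  refine ContinuousOn.circleIntegrable hr fun z hz => ?_
  have hzw : z - w ≠ 0 := sub_ne_zero.2 fun hzw => hw (hzw ▸ hz)
  have hinv : ContinuousAt (fun z => (z - w)⁻¹) z := by fun_prop (disch := assumption)
  exact (hinv.smul (differentiableAt_resolvent (h hz)).continuousAt).continuousWithinAt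

theorem commute_resolventCauchyIntegral (hr : 0 ≤ r) (h : sphere c r ⊆ resolventSet ℂ x)
    (hw : w ∉ sphere c r) : Commute x (resolventCauchyIntegral x c r w) := by
  have hint := circleIntegrable_sub_inv_smul_resolvent hr h hw
  refine Commute.smul_right ?_ _
  rw [commute_iff_eq, mul_circleIntegral hint, circleIntegral_mul hint]
  refine circleIntegral.integral_congr hr fun z hz => ?_
  obtain ⟨u, hu⟩ := h hz
  have hcomm : Commute x u := hu ▸ (Algebra.commute_algebraMap_right z x).sub_right rfl
  rw [resolvent, ← hu, Ring.inverse_unit]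
  exact (hcomm.units_inv_right.smul_right _).eq

-- `w - x = (z - x) - (z - w)`, so `(w - x) (z - w)⁻¹ (z - x)⁻¹ = (z - w)⁻¹ - (z - x)⁻¹`.
theorem sub_mul_resolventCauchyIntegral (hr : 0 ≤ r) (h : sphere c r ⊆ resolventSet ℂ x)
    (hw : w ∉ sphere c r) :
    (algebraMap ℂ A w - x) * resolventCauchyIntegral x c r w =
      ((2 * Real.pi * I : ℂ)⁻¹ * ∮ z in C(c, r), (z - w)⁻¹) • 1 - rieszProjection x c r := by
  have hinv : CircleIntegrable (fun z : ℂ => (z - w)⁻¹ • (1 : A)) c r :=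
    ContinuousOn.circleIntegrable hr fun z hz => by
      have hzw : z - w ≠ 0 := sub_ne_zero.2 fun hzw => hw (hzw ▸ hz)
      exact ContinuousAt.continuousWithinAt (by fun_prop (disch := assumption))
  have hpt : Set.EqOn (fun z => (algebraMap ℂ A w - x) * ((z - w)⁻¹ • resolvent x z))
      (fun z => (z - w)⁻¹ • 1 - resolvent x z) (sphere c r) := by
    intro z hz
    have hzw : z - w ≠ 0 := sub_ne_zero.2 fun hzw => hw (hzw ▸ hz)
    have hsplit : algebraMap ℂ A w - x = (algebraMap ℂ A z - x) - (z - w) • (1 : A) := by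
      simp only [Algebra.algebraMap_eq_smul_one, sub_smul]
      abel
    dsimp only
    rw [hsplit, mul_smul_comm, sub_mul, resolvent, Ring.mul_inverse_cancel _ (h hz),
      smul_mul_assoc, one_mul, smul_sub, inv_smul_smul₀ hzw]
  rw [resolventCauchyIntegral, rieszProjection, mul_smul_comm,
    mul_circleIntegral (circleIntegrable_sub_inv_smul_resolvent hr h hw),
    circleIntegral.integral_congr hr hpt,
    circleIntegral.integral_sub hinv (circleIntegrable_resolvent hr h),
    circleIntegral.integral_smul_const, smul_sub, smul_smul]

theorem sub_mul_resolventCauchyIntegral_of_mem_ball (h : sphere c r ⊆ resolventSet ℂ x)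
    (hw : w ∈ ball c r) :
    (algebraMap ℂ A w - x) * resolventCauchyIntegral x c r w = 1 - rieszProjection x c r := by
  have hr : 0 ≤ r := (pos_of_mem_ball hw).le
  rw [sub_mul_resolventCauchyIntegral hr h fun hw' => (mem_ball.1 hw).ne hw',
    circleIntegral.integral_sub_inv_of_mem_ball hw, inv_mul_cancel₀ two_pi_I_ne_zero, one_smul]

theorem sub_mul_resolventCauchyIntegral_of_notMem_closedBall (hr : 0 ≤ r)
    (h : sphere c r ⊆ resolventSet ℂ x) (hw : w ∉ closedBall c r) :
    (algebraMap ℂ A w - x) * resolventCauchyIntegral x c r w = -rieszProjection x c r := by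
  have hzero : (∮ z in C(c, r), (z - w)⁻¹) = 0 := by
    refine DiffContOnCl.circleIntegral_eq_zero hr (DifferentiableOn.diffContOnCl fun z hz => ?_)
    have hzw : z - w ≠ 0 :=
      sub_ne_zero.2 fun hzw => hw (hzw ▸ closure_ball_subset_closedBall hz)
    exact DifferentiableAt.differentiableWithinAt (by fun_prop (disch := assumption))
  rw [sub_mul_resolventCauchyIntegral hr h fun hw' => hw (sphere_subset_closedBall hw'), hzero,
    mul_zero, zero_smul, zero_sub]

theorem differentiableOn_resolventCauchyIntegral (hr : 0 < r) (h : sphere c r ⊆ resolventSet ℂ x) :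
    DifferentiableOn ℂ (resolventCauchyIntegral x c r) (ball c r) := by
  lift r to NNReal using hr.le
  have hseries := hasFPowerSeriesOn_cauchy_integral (circleIntegrable_resolvent hr.le h) hr
  rw [← eball_coe]
  exact hseries.differentiableOn

theorem sphere_subset_closedBall_sdiff_ball {X : Type*} [PseudoMetricSpace X] {p : X} {r s t : ℝ}
    (hrt : r ≤ t) (hts : t ≤ s) : sphere p t ⊆ closedBall p s \ ball p r :=
  closedBall_sdiff_ball.superset.trans
    (Set.sdiff_subset_sdiff (closedBall_subset_closedBall hts) (ball_subset_ball hrt))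

theorem rieszProjection_eq_of_annulus (hr : 0 < r) (hrs : r ≤ s)
    (h : closedBall c s \ ball c r ⊆ resolventSet ℂ x) :
    rieszProjection x c s = rieszProjection x c r := by
  rw [rieszProjection, circleIntegral_eq_of_differentiable_on_annulus_off_countable hr hrs
    Set.countable_empty, rieszProjection]
  · exact fun z hz => (differentiableAt_resolvent (h hz)).continuousAt.continuousWithinAt
  · rintro z ⟨⟨hzs, hzr⟩, -⟩
    exact differentiableAt_resolvent
      (h ⟨ball_subset_closedBall hzs, fun hz => hzr (ball_subset_closedBall hz)⟩)

-- Multiply `(w - x) S(w) = 1 - P` by the resolvent and integrate over the inner circle, on whose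
-- disc the Cauchy integral `S` is holomorphic.
theorem isIdempotentElem_rieszProjection (hr : 0 < r) (hrs : r < s)
    (h : closedBall c s \ ball c r ⊆ resolventSet ℂ x) :
    IsIdempotentElem (rieszProjection x c s) := by
  have hs := (sphere_subset_closedBall_sdiff_ball hrs.le le_rfl).trans h
  have hr' := (sphere_subset_closedBall_sdiff_ball le_rfl hrs.le).trans h
  set P := rieszProjection x c s
  set S := resolventCauchyIntegral x c s
  have hS : DifferentiableOn ℂ S (closedBall c r) :=
    (differentiableOn_resolventCauchyIntegral (hr.trans hrs) hs).mono (closedBall_subset_ball hrs)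
  have hS_integral : (∮ w in C(c, r), S w) = 0 :=
    DiffContOnCl.circleIntegral_eq_zero hr.le
      (DifferentiableOn.diffContOnCl (hS.mono closure_ball_subset_closedBall))
  have hmul :
      Set.EqOn (fun w => resolvent x w * P) (fun w => resolvent x w - S w) (sphere c r) := by
    intro w hw
    have hwS := sub_mul_resolventCauchyIntegral_of_mem_ball hs
      (closedBall_subset_ball hrs (sphere_subset_closedBall hw))
    have hP : P = 1 - (algebraMap ℂ A w - x) * S w := by rw [hwS, sub_sub_cancel]
    simp only [hP, mul_sub, mul_one]
    rw [← mul_assoc, resolvent, Ring.inverse_mul_cancel _ (hr' hw), one_mul]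
  have hR := circleIntegrable_resolvent hr.le hr'
  calc P * P = rieszProjection x c r * P := by rw [← rieszProjection_eq_of_annulus hr hrs.le h]
    _ = (2 * Real.pi * I : ℂ)⁻¹ • ∮ w in C(c, r), resolvent x w * P := by
      rw [rieszProjection, smul_mul_assoc, circleIntegral_mul hR]
    _ = (2 * Real.pi * I : ℂ)⁻¹ • ∮ w in C(c, r), (resolvent x w - S w) := by
      rw [circleIntegral.integral_congr hr.le hmul]
    _ = rieszProjection x c r := by
      rw [circleIntegral.integral_sub hR
        ((hS.continuousOn.mono sphere_subset_closedBall).circleIntegrable hr.le), hS_integral,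
        sub_zero, rieszProjection]
    _ = P := (rieszProjection_eq_of_annulus hr hrs.le h).symm

theorem rieszProjection_ne_zero (h : sphere c r ⊆ resolventSet ℂ x) (hw : w ∈ ball c r)
    (hwx : w ∈ spectrum ℂ x) : rieszProjection x c r ≠ 0 := by
  intro h0
  have hinv := sub_mul_resolventCauchyIntegral_of_mem_ball h hw
  have hcomm : Commute (algebraMap ℂ A w - x) (resolventCauchyIntegral x c r w) :=
    (Algebra.commute_algebraMap_left w _).sub_left (commute_resolventCauchyIntegral
      (pos_of_mem_ball hw).le h fun hw' => (mem_ball.1 hw).ne hw')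
  rw [h0, sub_zero] at hinv
  exact hwx (isUnit_iff_exists.2 ⟨_, hinv, hcomm.eq ▸ hinv⟩)

theorem exists_isIdempotentElem_mul_of_not_accPt (hc : c ∈ nzSpec x)
    (hiso : ¬AccPt c (𝓟 (spectrum ℂ x))) : ∃ v, IsIdempotentElem (x * v) ∧ x * v ≠ 0 := by
  rw [accPt_iff_frequently_nhdsNE, not_frequently] at hiso
  obtain ⟨ρ, hρ, hball⟩ := mem_nhdsWithin_iff.1 hiso
  obtain ⟨s, hs, hsρ⟩ := exists_between (lt_min hρ (norm_pos_iff.2 hc.2))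
  obtain ⟨hsρ, hsc⟩ := lt_min_iff.1 hsρ
  have hannulus : closedBall c s \ ball c (s / 2) ⊆ resolventSet ℂ x := by
    rintro z ⟨hzs, hz⟩
    refine not_not.1 (hball ⟨closedBall_subset_ball hsρ hzs, ?_⟩)
    rintro rfl
    exact hz (mem_ball_self (half_pos hs))
  have hsphere := (sphere_subset_closedBall_sdiff_ball (half_le_self hs.le) le_rfl).trans hannulus
  have hzero : (0 : ℂ) ∉ closedBall c s := by simpa using hsc
  have hfactor : x * resolventCauchyIntegral x c s 0 = rieszProjection x c s := by
    simpa using sub_mul_resolventCauchyIntegral_of_notMem_closedBall hs.le hsphere hzero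
  refine ⟨resolventCauchyIntegral x c s 0, ?_⟩
  rw [hfactor]
  exact ⟨isIdempotentElem_rieszProjection (half_pos hs) (half_lt_self hs) hannulus,
    rieszProjection_ne_zero hsphere (mem_ball_self hs) hc.1⟩

end RieszProjection

section Inessential

variable {A : Type*} [Ring A] [Algebra ℂ A] {d : A}

/-- `d` is inessential if the spectra of its right multiples `d * x` accumulate at most at `0`. -/
def IsInessential (d : A) : Prop :=
  ∀ x : A, ∀ z : ℂ, AccPt z (𝓟 (spectrum ℂ (d * x))) → z = 0

theorem IsInessential.mul_right (hd : IsInessential d) (y : A) : IsInessential (d * y) :=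
  fun x => by simpa only [mul_assoc] using hd (y * x)

theorem IsInessential.of_forall_nzSpec_subset {d' : A} (hd : IsInessential d)
    (hsub : ∀ x, nzSpec (d' * x) ⊆ nzSpec (d * x)) : IsInessential d' := by
  refine fun x z hz => by_contra fun hz0 => hz0 (hd x z ?_)
  rw [accPt_iff_frequently_nhdsNE] at hz ⊢
  have hne : ∀ᶠ w in 𝓝[≠] z, w ≠ 0 := nhdsWithin_le_nhds (isOpen_ne.mem_nhds hz0)
  exact (hz.and_eventually hne).mono fun w hw => (hsub x hw).1

end Inessential

section InessentialIdempotent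

variable {A : Type*} [NormedRing A] [NormedAlgebra ℂ A] [CompleteSpace A] {d p : A}

theorem IsInessential.exists_isIdempotentElem_mul (hss : JacobsonSemisimple A)
    (hd : IsInessential d) (hd0 : d ≠ 0) : ∃ v, IsIdempotentElem (d * v) ∧ d * v ≠ 0 := by
  obtain ⟨y, hy⟩ : ∃ y, nzSpec (d * y) ≠ ∅ := by
    contrapose! hd0
    exact hss.eq_zero_of_nzSpec_mul_eq_empty hd0
  obtain ⟨c, hc⟩ := Set.nonempty_iff_ne_empty.2 hy
  obtain ⟨v, hv⟩ := exists_isIdempotentElem_mul_of_not_accPt hc (mt (hd y c) hc.2)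
  exact ⟨y * v, by rwa [← mul_assoc]⟩

theorem exists_forall_mul_eq_smul_of_orthogonalIdempotents {g : ℕ → A}
    (hg : OrthogonalIdempotents g) :
    ∃ (w : A) (c : ℕ → ℝ), (∀ n, 0 < c n) ∧ Tendsto c atTop (𝓝 0) ∧
      ∀ n, w * g n = (c n : ℂ) • g n := by
  set c : ℕ → ℝ := fun n => (1 / 2) ^ n * (‖g n‖ + 1)⁻¹
  have hpos : ∀ n, 0 < c n := fun n => by positivity
  have hgeom : Summable fun n : ℕ => (1 / 2 : ℝ) ^ n := summable_geometric_two
  have hle : ∀ n, c n ≤ (1 / 2) ^ n := fun n =>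
    mul_le_of_le_one_right (by positivity) (inv_le_one_of_one_le₀ (by simp))
  have hsum : Summable fun n => (c n : ℂ) • g n := by
    refine Summable.of_norm_bounded hgeom fun n => ?_
    rw [norm_smul, norm_real, Real.norm_of_nonneg (hpos n).le, mul_assoc]
    refine mul_le_of_le_one_right (by positivity) ?_
    rw [inv_mul_le_iff₀ (by positivity)]
    linarith
  refine ⟨∑' n, (c n : ℂ) • g n, c, hpos,
    squeeze_zero (fun n => (hpos n).le) hle hgeom.tendsto_atTop_zero, fun n => ?_⟩
  rw [← hsum.tsum_mul_right, tsum_eq_single n, smul_mul_assoc, hg.idem n]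
  intro m hmn
  rw [smul_mul_assoc, hg.ortho hmn, smul_zero]

-- Otherwise `p * (1 + w)`, with `w = ∑ cₙ gₙ` and `0 < cₙ → 0`, has the eigenvalues `1 + cₙ`.
theorem IsInessential.exists_eq_zero_of_orthogonalIdempotents (hp : IsInessential p) {g : ℕ → A}
    (hg : OrthogonalIdempotents g) (hpg : ∀ n, p * g n = g n) : ∃ n, g n = 0 := by
  by_contra! hg0
  obtain ⟨w, c, hpos, hlim, hw⟩ := exists_forall_mul_eq_smul_of_orthogonalIdempotents hg
  have hmem : ∀ n, (1 + c n : ℂ) ∈ spectrum ℂ (p * (1 + w)) := fun n =>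
    mem_spectrum_of_mul_eq_smul (by
      rw [mul_assoc, add_mul, one_mul, hw, mul_add, mul_smul_comm, hpg, add_smul, one_smul]) (hg0 n)
  have htends : Tendsto (fun n => (1 + c n : ℂ)) atTop (𝓝[≠] 1) := by
    refine tendsto_nhdsWithin_iff.2 ⟨?_, .of_forall fun n => by simp [(hpos n).ne']⟩
    simpa using tendsto_const_nhds.add ((continuous_ofReal.tendsto 0).comp hlim)
  refine one_ne_zero (hp (1 + w) 1 ?_)
  exact accPt_iff_frequently_nhdsNE.2 (htends.frequently (.of_forall hmem))

end InessentialIdempotent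

section Corner

theorem corner_le_corner {S : Type*} [Semigroup S] {e f : S} (hf : f ∈ corner e) :
    corner f ≤ corner e := by
  obtain ⟨t, rfl⟩ := hf
  rintro _ ⟨r, rfl⟩
  exact ⟨t * e * r * e * t, by simp only [mul_assoc]⟩

theorem mem_corner_of_le {S : Type*} [Semigroup S] {P : ℕ → S} (hP : ∀ n, IsIdempotentElem (P n))
    (hdec : ∀ n, P (n + 1) ∈ corner (P n)) {m n : ℕ} (hmn : m ≤ n) : P n ∈ corner (P m) := by
  induction n, hmn using Nat.le_induction with
  | base => exact (mem_corner_iff (hP m)).2 ⟨hP m, hP m⟩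
  | succ n _ ih => exact corner_le_corner ih (hdec n)

theorem orthogonalIdempotents_sub_succ {R : Type*} [Ring R] {P : ℕ → R}
    (hP : ∀ n, IsIdempotentElem (P n)) (hdec : ∀ n, P (n + 1) ∈ corner (P n)) :
    OrthogonalIdempotents fun n => P n - P (n + 1) := by
  have hle : ∀ {m n}, m ≤ n → P m * P n = P n ∧ P n * P m = P n := fun {m n} hmn =>
    (mem_corner_iff (hP m)).1 (mem_corner_of_le hP hdec hmn)
  refine ⟨fun n => ?_, fun m n hmn => ?_⟩
  · have hsucc := hle n.le_succ
    simp only [IsIdempotentElem, mul_sub, sub_mul, (hP _).eq, hsucc]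
    abel
  · rcases hmn.lt_or_gt with h | h
    · have h₁ := (hle h.le).1
      have h₂ := (hle (h.le.trans n.le_succ)).1
      have h₃ := (hle (Nat.succ_le_of_lt h)).1
      have h₄ := (hle (Nat.succ_le_succ h.le)).1
      simp only [mul_sub, sub_mul, h₁, h₂, h₃, h₄]
      abel
    · have h₁ := (hle h.le).2
      have h₂ := (hle (h.le.trans m.le_succ)).2
      have h₃ := (hle (Nat.succ_le_of_lt h)).2
      have h₄ := (hle (Nat.succ_le_succ h.le)).2
      simp only [mul_sub, sub_mul, h₁, h₂, h₃, h₄]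
      abel

/-- A nonzero idempotent `e` is primitive if `0` and `e` are the only idempotents of its corner
`eRe`. -/
structure IsPrimitiveIdempotent {R : Type*} [Ring R] (e : R) : Prop where
  isIdempotentElem : IsIdempotentElem e
  ne_zero : e ≠ 0
  eq_zero_or_eq : ∀ f ∈ corner e, IsIdempotentElem f → f = 0 ∨ f = e

/-- A nonzero idempotent `e` of a complex algebra is minimal if its corner `eAe` is `ℂe`. In a
semiprime algebra this makes `Ae` a minimal left ideal. -/
structure IsMinimalIdempotent {A : Type*} [Ring A] [Algebra ℂ A] (e : A) : Prop where
  isIdempotentElem : IsIdempotentElem e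
  ne_zero : e ≠ 0
  exists_mul_mul_eq_smul : ∀ w, ∃ s : ℂ, e * w * e = s • e

-- The spectrum of left multiplication by `x` on `eA` is nonempty.
theorem exists_eq_smul_of_forall_corner_invertible {A : Type*} [NormedRing A] [NormedAlgebra ℂ A]
    [CompleteSpace A] {e x : A} (he : IsIdempotentElem e) (he0 : e ≠ 0)
    (hinv : ∀ y ∈ corner e, y ≠ 0 → ∃ z ∈ corner e, y * z = e ∧ z * y = e) (hx : x ∈ corner e) :
    ∃ s : ℂ, x = s • e := by
  have hmem {y : A} : y ∈ corner e ↔ e * y = y ∧ y * e = y := mem_corner_iff he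
  let X := (ContinuousLinearMap.mul ℂ A (1 - e)).ker
  have hX {y : A} : y ∈ X ↔ e * y = y := by simp [X, sub_eq_zero, eq_comm]
  have : Nontrivial X := ⟨⟨e, hX.2 he⟩, 0, fun h => he0 (congrArg Subtype.val h)⟩
  let L (y : A) (hy : y ∈ corner e) : X →L[ℂ] X :=
    (ContinuousLinearMap.mul ℂ A y).restrict fun z _ =>
      hX.2 (by rw [ContinuousLinearMap.mul_apply', ← mul_assoc, (hmem.1 hy).1])
  have hLmul {y z : A} (hy : y ∈ corner e) (hz : z ∈ corner e) (h : y * z = e) :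
      L y hy * L z hz = 1 := by
    ext u
    change y * (z * u) = u
    rw [← mul_assoc, h, hX.1 u.2]
  obtain ⟨s, hs⟩ := spectrum.nonempty (L x hx)
  refine ⟨s, by_contra fun hne => hs ?_⟩
  have hsx : s • e - x ∈ corner e := hmem.2
    ⟨by rw [mul_sub, mul_smul_comm, he.eq, (hmem.1 hx).1],
      by rw [sub_mul, smul_mul_assoc, he.eq, (hmem.1 hx).2]⟩
  obtain ⟨z, hz, hmul, hmul'⟩ := hinv _ hsx (sub_ne_zero.2 (Ne.symm hne))
  have hL : algebraMap ℂ (X →L[ℂ] X) s - L x hx = L (s • e - x) hsx := by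
    ext y
    simp [L, Algebra.algebraMap_eq_smul_one, hX.1 y.2]
  rw [spectrum.mem_resolventSet_iff, hL]
  exact isUnit_iff_exists.2 ⟨L z hz, hLmul hsx hz hmul, hLmul hz hsx hmul'⟩

end Corner

section Primitive

variable {A : Type*} [NormedRing A] [NormedAlgebra ℂ A] [CompleteSpace A] {e p : A}

theorem IsInessential.exists_succ_eq_of_forall_mem_corner {P : ℕ → A} (h0 : IsInessential (P 0))
    (hP : ∀ n, IsIdempotentElem (P n)) (hdec : ∀ n, P (n + 1) ∈ corner (P n)) :
    ∃ n, P (n + 1) = P n := by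
  have hP0 : ∀ n, P 0 * P n = P n := fun n =>
    ((mem_corner_iff (hP 0)).1 (mem_corner_of_le hP hdec n.zero_le)).1
  obtain ⟨n, hn⟩ := h0.exists_eq_zero_of_orthogonalIdempotents
    (orthogonalIdempotents_sub_succ hP hdec) fun n => by rw [mul_sub, hP0, hP0]
  exact ⟨n, (sub_eq_zero.1 hn).symm⟩

theorem IsInessential.exists_isPrimitiveIdempotent (hp : IsInessential p)
    (hidem : IsIdempotentElem p) (hp0 : p ≠ 0) : ∃ e ∈ corner p, IsPrimitiveIdempotent e := by
  have hwf : WellFounded fun f f' : {f : A // IsIdempotentElem f ∧ f ∈ corner p} =>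
      f.1 ∈ corner f'.1 ∧ f ≠ f' := by
    refine wellFounded_iff_isEmpty_descending_chain.2 ⟨fun ⟨P, hP⟩ => ?_⟩
    have h0 : IsInessential (P 0).1 :=
      ((mem_corner_iff hidem).1 (P 0).2.2).1 ▸ hp.mul_right (P 0).1
    obtain ⟨n, hn⟩ := IsInessential.exists_succ_eq_of_forall_mem_corner (P := fun n => (P n).1)
      h0 (fun n => (P n).2.1) fun n => (hP n).1
    exact (hP n).2 (Subtype.ext hn)
  obtain ⟨⟨e, he, hep⟩, he0, hmin⟩ := hwf.has_min {f | f.1 ≠ 0}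
    ⟨⟨p, hidem, (mem_corner_iff hidem).2 ⟨hidem, hidem⟩⟩, hp0⟩
  refine ⟨e, hep, he, he0, fun f hf hfidem => ?_⟩
  by_contra! hne
  exact hmin ⟨f, hfidem, corner_le_corner hep hf⟩ hne.1
    ⟨hf, fun h => hne.2 (congrArg Subtype.val h)⟩

theorem IsPrimitiveIdempotent.exists_mul_eq (hss : JacobsonSemisimple A)
    (he : IsPrimitiveIdempotent e) (hess : IsInessential e) {x : A} (hx : x ∈ corner e)
    (hx0 : x ≠ 0) : ∃ z ∈ corner e, x * z = e := by
  have hidem := he.isIdempotentElem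
  obtain ⟨hex, hxe⟩ := (mem_corner_iff hidem).1 hx
  have hxess : IsInessential x := hex ▸ hess.mul_right x
  obtain ⟨v, hv, hv0⟩ := hxess.exists_isIdempotentElem_mul hss hx0
  have hev : e * (x * v) = x * v := by rw [← mul_assoc, hex]
  have hcorner : x * v * e ∈ corner e := (mem_corner_iff hidem).2
    ⟨by rw [← mul_assoc, hev], by rw [mul_assoc, hidem.eq]⟩
  have hxve : IsIdempotentElem (x * v * e) := by
    rw [IsIdempotentElem, mul_assoc (x * v) e, ← mul_assoc e, hev, ← mul_assoc, hv.eq]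
  have hxve0 : x * v * e ≠ 0 := fun h0 => hv0 <|
    calc x * v = x * v * e * (x * v) := by rw [mul_assoc (x * v) e, hev, hv.eq]
      _ = 0 := by rw [h0, zero_mul]
  refine ⟨e * v * e, ⟨v, rfl⟩, ?_⟩
  rw [← mul_assoc, ← mul_assoc, hxe]
  exact (he.eq_zero_or_eq _ hcorner hxve).resolve_left hxve0

theorem IsPrimitiveIdempotent.exists_mul_eq_and_mul_eq (hss : JacobsonSemisimple A)
    (he : IsPrimitiveIdempotent e) (hess : IsInessential e) {x : A} (hx : x ∈ corner e)
    (hx0 : x ≠ 0) : ∃ z ∈ corner e, x * z = e ∧ z * x = e := by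
  obtain ⟨z, hz, hxz⟩ := he.exists_mul_eq hss hess hx hx0
  have hz0 : z ≠ 0 := fun h0 => he.ne_zero (by rw [← hxz, h0, mul_zero])
  obtain ⟨z', hz', hzz'⟩ := he.exists_mul_eq hss hess hz hz0
  have hxz' : x = z' := by
    rw [← ((mem_corner_iff he.isIdempotentElem).1 hx).2, ← hzz', ← mul_assoc, hxz,
      ((mem_corner_iff he.isIdempotentElem).1 hz').1]
  exact ⟨z, hz, hxz, by rw [hxz', hzz']⟩

theorem IsPrimitiveIdempotent.isMinimalIdempotent (hss : JacobsonSemisimple A)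
    (he : IsPrimitiveIdempotent e) (hess : IsInessential e) : IsMinimalIdempotent e :=
  ⟨he.isIdempotentElem, he.ne_zero, fun w =>
    exists_eq_smul_of_forall_corner_invertible he.isIdempotentElem he.ne_zero
      (fun _ hy hy0 => he.exists_mul_eq_and_mul_eq hss hess hy hy0) ⟨w, rfl⟩⟩

theorem IsInessential.exists_isMinimalIdempotent_mul (hss : JacobsonSemisimple A) {d : A}
    (hd : IsInessential d) (hd0 : d ≠ 0) : ∃ v, IsMinimalIdempotent (d * v) := by
  obtain ⟨v, hidem, hne⟩ := hd.exists_isIdempotentElem_mul hss hd0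
  obtain ⟨e, he, hprim⟩ := (hd.mul_right v).exists_isPrimitiveIdempotent hidem hne
  have hdve : d * (v * e) = e := by rw [← mul_assoc, ((mem_corner_iff hidem).1 he).1]
  refine ⟨v * e, ?_⟩
  rw [hdve]
  exact hprim.isMinimalIdempotent hss (hdve ▸ hd.mul_right (v * e))

end Primitive

section Socle

variable {A : Type*} [Ring A] [Algebra ℂ A] {a b e s : A}

theorem IsMinimalIdempotent.mem_socle (he : IsMinimalIdempotent e) : e ∈ socle A := by
  have hrank : srank e ≤ 1 := iSup_le fun x => by
    obtain ⟨s, hs⟩ := he.exists_mul_mul_eq_smul x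
    have hspec : nzSpec (x * e) = nzSpec (s • e) := by
      rw [← hs, mul_assoc, nzSpec_mul_comm e, mul_assoc, he.isIdempotentElem.eq]
    rw [hspec, nzSpec_smul_of_isIdempotentElem he.isIdempotentElem he.ne_zero]
    exact (Set.encard_le_encard Set.sdiff_subset).trans (Set.encard_singleton s).le
  exact (hrank.trans_lt (by simp)).ne

theorem SocleIsMinimalTwoSidedIdeal.mem_span_singleton (hmin : SocleIsMinimalTwoSidedIdeal A)
    (he : e ∈ socle A) (he0 : e ≠ 0) (hs : s ∈ socle A) : s ∈ TwoSidedIdeal.span {e} := by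
  obtain ⟨I, hI, -, hImin⟩ := hmin
  have hspan_le : TwoSidedIdeal.span {e} ≤ I :=
    TwoSidedIdeal.span_le.2 (Set.singleton_subset_iff.2 (hI ▸ he))
  rcases hImin _ hspan_le with h | h
  · have hmem : e ∈ TwoSidedIdeal.span {e} := TwoSidedIdeal.subset_span rfl
    exact absurd ((TwoSidedIdeal.mem_bot A).1 (h ▸ hmem)) he0
  · rwa [h, ← SetLike.mem_coe, hI]

theorem mul_mul_eq_zero_of_mem_span_singleton {R : Type*} [Ring R] {c e s : R}
    (h : ∀ u, c * u * e = 0) (hs : s ∈ TwoSidedIdeal.span {e}) (u : R) : c * u * s = 0 := by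
  induction hs using TwoSidedIdeal.span_induction generalizing u with
  | mem x hx => rw [hx, h]
  | zero => rw [mul_zero]
  | add x y _ _ hx hy => rw [mul_add, hx, hy, add_zero]
  | neg x _ hx => rw [mul_neg, hx, neg_zero]
  | left_absorb x y _ hy => rw [← mul_assoc, mul_assoc c, hy]
  | right_absorb y x _ hx => rw [← mul_assoc, hx, zero_mul]

theorem JacobsonSemisimple.mul_eq_zero_of_forall_mul_mul_eq_zero {R : Type*} [Ring R] {a e : R}
    (hss : JacobsonSemisimple R) (h : ∀ y, e * y * (a * e) = 0) : a * e = 0 :=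
  hss.eq_zero_of_forall_mul_mul_eq_zero fun y => by
    rw [mul_assoc a, mul_assoc a, h, mul_zero]

theorem forall_eq_zero_or_forall_eq_zero {M N N' : Type*} [AddZeroClass M] [AddZeroClass N]
    [AddZeroClass N'] (F : M →+ N) (G : M →+ N') (h : ∀ y, F y = 0 ∨ G y = 0) :
    (∀ y, F y = 0) ∨ ∀ y, G y = 0 := by
  by_contra! hne
  obtain ⟨⟨y, hy⟩, z, hz⟩ := hne
  have hGy := (h y).resolve_left hy
  have hFz := (h z).resolve_right hz
  rcases h (y + z) with hF | hG
  · exact hy (by rwa [map_add, hFz, add_zero] at hF)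
  · exact hz (by rwa [map_add, hGy, zero_add] at hG)

theorem IsMinimalIdempotent.mul_mul_eq_zero_or (he : IsMinimalIdempotent e)
    (hsub : ∀ x, nzSpec (a * x) ⊆ nzSpec (b * x)) (y u : A) :
    e * y * (a * u * e) = 0 ∨ e * y * ((a - b) * u * e) = 0 := by
  have hspec : ∀ {c : A} {s : ℂ}, e * y * (c * u * e) = s • e →
      nzSpec (c * (u * e * (e * y))) = {s} \ {0} := fun {c s} hs => by
    rw [← nzSpec_smul_of_isIdempotentElem he.isIdempotentElem he.ne_zero, ← hs,
      nzSpec_mul_comm (e * y)]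
    simp only [mul_assoc]
  obtain ⟨s, hs⟩ := he.exists_mul_mul_eq_smul (y * (a * u))
  obtain ⟨t, ht⟩ := he.exists_mul_mul_eq_smul (y * (b * u))
  have hs' : e * y * (a * u * e) = s • e := by rw [← hs]; simp only [mul_assoc]
  have ht' : e * y * (b * u * e) = t • e := by rw [← ht]; simp only [mul_assoc]
  have hst := hsub (u * e * (e * y))
  rw [hspec hs', hspec ht'] at hst
  rcases eq_or_ne s 0 with rfl | hs0
  · exact .inl (by rw [hs', zero_smul])
  · have heq : s = t := (hst ⟨rfl, hs0⟩).1
    exact .inr (by rw [sub_mul, sub_mul, mul_sub, hs', ht', heq, sub_self])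

-- The pointwise alternative is additive in each of `y` and `u`, so it holds globally.
theorem IsMinimalIdempotent.forall_mul_eq_zero_or (hss : JacobsonSemisimple A)
    (he : IsMinimalIdempotent e) (hsub : ∀ x, nzSpec (a * x) ⊆ nzSpec (b * x)) :
    (∀ u, a * u * e = 0) ∨ ∀ u, (a - b) * u * e = 0 := by
  refine forall_eq_zero_or_forall_eq_zero ((AddMonoidHom.mulRight e).comp (.mulLeft a))
    ((AddMonoidHom.mulRight e).comp (.mulLeft (a - b))) fun u => ?_
  exact (forall_eq_zero_or_forall_eq_zero
    ((AddMonoidHom.mulRight (a * u * e)).comp (.mulLeft e))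
    ((AddMonoidHom.mulRight ((a - b) * u * e)).comp (.mulLeft e))
    fun y => he.mul_mul_eq_zero_or hsub y u).imp
      hss.mul_eq_zero_of_forall_mul_mul_eq_zero hss.mul_eq_zero_of_forall_mul_mul_eq_zero

end Socle

section SocleAnnihilator

variable {A : Type*} [NormedRing A] [NormedAlgebra ℂ A] [CompleteSpace A]

theorem IsInessential.eq_zero_of_forall_mul_socle (hss : JacobsonSemisimple A) {d : A}
    (hd : IsInessential d) (h : ∀ u, ∀ s ∈ socle A, d * u * s = 0) : d = 0 := by
  by_contra hd0
  obtain ⟨v, hv⟩ := hd.exists_isMinimalIdempotent_mul hss hd0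
  exact hv.ne_zero (hv.isIdempotentElem.eq ▸ h v _ hv.mem_socle)

theorem IsInessential.mul_mul_eq_zero_of_forall_mul_socle (hss : JacobsonSemisimple A) {d l : A}
    (hd : IsInessential d) (hl : ∀ u, ∀ s ∈ socle A, l * u * s = 0) (y : A) : d * y * l = 0 := by
  rw [mul_assoc]
  refine (hd.mul_right (y * l)).eq_zero_of_forall_mul_socle hss fun u s hs => ?_
  rw [← mul_assoc d, mul_assoc (d * y), mul_assoc (d * y), hl u s hs, mul_zero]

theorem eq_of_forall_sub_mul_socle (hss : JacobsonSemisimple A) {a b : A} (ha : IsInessential a)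
    (hb : IsInessential b) (h : ∀ u, ∀ s ∈ socle A, (a - b) * u * s = 0) : a = b := by
  refine sub_eq_zero.1 (hss.eq_zero_of_forall_mul_mul_eq_zero fun y => ?_)
  rw [sub_mul a, sub_mul, ha.mul_mul_eq_zero_of_forall_mul_socle hss h,
    hb.mul_mul_eq_zero_of_forall_mul_socle hss h, sub_self]

end SocleAnnihilator

theorem eq_iff_nzSpec_subset_of_socle_minimal
    {A : Type*} [NormedRing A] [NormOneClass A] [NormedAlgebra ℂ A] [CompleteSpace A]
    (hss : JacobsonSemisimple A) (hmin : SocleIsMinimalTwoSidedIdeal A)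
    (a b : A) (ha : a ≠ 0) (hb : b ≠ 0)
    (hacc : ∀ x : A, ∀ z : ℂ, AccPt z (Filter.principal (spectrum ℂ (b * x))) → z = 0) :
    a = b ↔ ∀ x : A, nzSpec (a * x) ⊆ nzSpec (b * x) := by
  refine ⟨fun h x => h ▸ subset_rfl, fun hsub => ?_⟩
  have hb_ess : IsInessential b := hacc
  have ha_ess : IsInessential a := hb_ess.of_forall_nzSpec_subset hsub
  obtain ⟨v, he⟩ := hb_ess.exists_isMinimalIdempotent_mul hss hb
  have hsocle : ∀ {c : A}, (∀ u, c * u * (b * v) = 0) → ∀ u, ∀ s ∈ socle A, c * u * s = 0 :=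
    fun hc u _ hs => mul_mul_eq_zero_of_mem_span_singleton hc
      (hmin.mem_span_singleton he.mem_socle he.ne_zero hs) u
  rcases he.forall_mul_eq_zero_or hss hsub with h | h
  · exact absurd (ha_ess.eq_zero_of_forall_mul_socle hss (hsocle h)) ha
  · exact eq_of_forall_sub_mul_socle hss ha_ess hb_ess (hsocle h)
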